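/- The ℂ-vector space of homogeneous polynomials of degree 6 in ℂ[x,y,z] vanishing at all 15 points P₁,…,P₁₅ of Z(H₃) has dimension 13, and the 13 sextics g₁ = L₁f₁, g₂ = L₁f₂, g₃ = L₁f₃, g₄ = L₁f₄, g₅ = L₁f₅, g₆ = L₁f₆, g₇ = L₂f₁, g₈ = L₂f₃, g₉ = L₂f₄, g₁₀ = L₂f₅, g₁₁ = L₂f₆, g₁₂ = L₃f₁, g₁₃ = L₃f₂ form a basis of this space. -/

import Mathlib

open MvPolynomial

/-- The six linear forms dual to the lines of the `H₃` configuration. -/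
noncomputable def H3L (u : ℂ) : Fin 6 → MvPolynomial (Fin 3) ℂ :=
  ![X 1 - C (u - 1) * X 2, X 1 + C (u - 1) * X 2,
    X 0 - C u * X 2, X 0 + C u * X 2,
    X 0 - C (u - 1) * X 1, X 0 + C (u - 1) * X 1]

/-- The six quintics `fᵢ = ∏_{j ≠ i} Lⱼ`. -/
noncomputable def H3f (u : ℂ) (i : Fin 6) : MvPolynomial (Fin 3) ℂ :=
  ∏ j ∈ Finset.univ.erase i, H3L u j

/-- The 13 sextics `g₁ = L₁f₁, …, g₆ = L₁f₆, g₇ = L₂f₁, g₈ = L₂f₃, g₉ = L₂f₄, g₁₀ = L₂f₅,`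
`g₁₁ = L₂f₆, g₁₂ = L₃f₁, g₁₃ = L₃f₂`. -/
noncomputable def H3g (u : ℂ) : Fin 13 → MvPolynomial (Fin 3) ℂ :=
  ![H3L u 0 * H3f u 0, H3L u 0 * H3f u 1, H3L u 0 * H3f u 2,
    H3L u 0 * H3f u 3, H3L u 0 * H3f u 4, H3L u 0 * H3f u 5,
    H3L u 1 * H3f u 0, H3L u 1 * H3f u 2, H3L u 1 * H3f u 3,
    H3L u 1 * H3f u 4, H3L u 1 * H3f u 5,
    H3L u 2 * H3f u 0, H3L u 2 * H3f u 1]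

/-- The 15 points of the `H₃` root-system configuration. -/
noncomputable def H3pts (u : ℂ) : Fin 15 → (Fin 3 → ℂ) :=
  ![![1,0,0], ![0,1,0], ![0,0,1],
    ![1,u,u^2], ![-1,u,u^2], ![1,-u,u^2], ![1,u,-u^2],
    ![u,-u^2,1], ![-u,u^2,1], ![u,u^2,-1], ![u,u^2,1],
    ![u^2,1,-u], ![u^2,-1,u], ![-u^2,1,u], ![u^2,1,u]]

/-- The `ℂ`-vector space of homogeneous polynomials of degree `d` in `ℂ[x,y,z]`
vanishing at all 15 points of `Z(H₃)`. -/
noncomputable def H3V (u : ℂ) (d : ℕ) : Submodule ℂ (MvPolynomial (Fin 3) ℂ) :=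
  homogeneousSubmodule (Fin 3) ℂ d ⊓
    ⨅ i : Fin 15, LinearMap.ker (aeval (R := ℂ) (H3pts u i)).toLinearMap


/-- For each of the 15 points, the index of the first linear form vanishing there. -/
def H3a : Fin 15 → Fin 6 := ![0,2,4,0,0,1,1,2,3,3,2,1,1,0,0]

/-- For each of the 15 points, the index of the second linear form vanishing there. -/
def H3b : Fin 15 → Fin 6 := ![1,3,5,4,5,5,4,5,5,4,4,3,2,3,2]

/-- For each of the 15 points, a coordinate which does not vanish there. -/
def H3m : Fin 15 → Fin 3 := ![0,1,2,0,0,0,0,2,2,2,2,1,1,1,1]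

/-- The linear forms as functions. -/
def H3Lv (u : ℂ) (p : Fin 3 → ℂ) : Fin 6 → ℂ :=
  ![p 1 - (u - 1) * p 2, p 1 + (u - 1) * p 2,
    p 0 - u * p 2, p 0 + u * p 2,
    p 0 - (u - 1) * p 1, p 0 + (u - 1) * p 1]

lemma H3L_eval (u : ℂ) (p : Fin 3 → ℂ) (k : Fin 6) :
    aeval (R := ℂ) p (H3L u k) = H3Lv u p k := by
  fin_cases k <;> simp [H3L, H3Lv]

lemma H3L_hom (u : ℂ) (k : Fin 6) : (H3L u k).IsHomogeneous 1 := by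
  have hX : ∀ i : Fin 3, (X i : MvPolynomial (Fin 3) ℂ).IsHomogeneous 1 := isHomogeneous_X _
  have hC : ∀ (c : ℂ) (i : Fin 3), (C c * X i : MvPolynomial (Fin 3) ℂ).IsHomogeneous 1 :=
    fun c i => by simpa using (isHomogeneous_C _ c).mul (hX i)
  fin_cases k
  · exact (hX 1).sub (hC _ 2)
  · exact (hX 1).add (hC _ 2)
  · exact (hX 0).sub (hC _ 2)
  · exact (hX 0).add (hC _ 2)
  · exact (hX 0).sub (hC _ 1)
  · exact (hX 0).add (hC _ 1)

lemma H3prod_hom (u : ℂ) (s : Finset (Fin 6)) :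
    (∏ k ∈ s, H3L u k).IsHomogeneous s.card := by
  have h := IsHomogeneous.prod s (H3L u) (fun _ => 1) (fun k _ => H3L_hom u k)
  simpa using h

lemma H3L_a (u : ℂ) (hu : u ^ 2 = u + 1) (j : Fin 15) : H3Lv u (H3pts u j) (H3a j) = 0 := by
  fin_cases j <;> simp [H3Lv, H3a, H3pts] <;> grind

lemma H3L_b (u : ℂ) (hu : u ^ 2 = u + 1) (j : Fin 15) : H3Lv u (H3pts u j) (H3b j) = 0 := by
  fin_cases j <;> simp [H3Lv, H3b, H3pts] <;> grind

lemma H3L_ne (u : ℂ) (hu : u ^ 2 = u + 1) (j : Fin 15) (k : Fin 6) (ha : k ≠ H3a j)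
    (hb : k ≠ H3b j) : H3Lv u (H3pts u j) k ≠ 0 := by
  fin_cases j <;> fin_cases k <;> first
    | exact absurd rfl ha
    | exact absurd rfl hb
    | (clear ha hb; simp [H3Lv, H3pts] <;> grind)

lemma H3m_ne (u : ℂ) (hu : u ^ 2 = u + 1) (j : Fin 15) : H3pts u j (H3m j) ≠ 0 := by
  fin_cases j <;> simp [H3m, H3pts]

/-- Sextics separating the 15 points. -/
noncomputable def H3q (u : ℂ) (i : Fin 15) : MvPolynomial (Fin 3) ℂ :=
  X (H3m i) ^ 2 * ∏ k ∈ (Finset.univ.erase (H3a i)).erase (H3b i), H3L u k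

lemma H3q_hom (u : ℂ) (i : Fin 15) : (H3q u i).IsHomogeneous 6 := by
  have h1 := (isHomogeneous_X_pow (R := ℂ) (H3m i) 2).mul
    (H3prod_hom u ((Finset.univ.erase (H3a i)).erase (H3b i)))
  have h2 : ((Finset.univ.erase (H3a i)).erase (H3b i)).card = 4 := by
    clear h1; revert i; decide
  rw [h2] at h1
  exact h1

lemma H3q_ne (u : ℂ) (hu : u ^ 2 = u + 1) (i : Fin 15) :
    aeval (R := ℂ) (H3pts u i) (H3q u i) ≠ 0 := by
  simp only [H3q, map_mul, map_pow, aeval_X, map_prod, H3L_eval]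
  refine mul_ne_zero (pow_ne_zero _ (H3m_ne u hu i)) (Finset.prod_ne_zero_iff.2 ?_)
  intro k hk
  simp only [Finset.mem_erase, Finset.mem_univ, and_true] at hk
  exact H3L_ne u hu i k hk.2 hk.1

lemma H3q_zero (u : ℂ) (hu : u ^ 2 = u + 1) (i j : Fin 15) (hij : i ≠ j) :
    aeval (R := ℂ) (H3pts u j) (H3q u i) = 0 := by
  simp only [H3q, map_mul, map_pow, aeval_X, map_prod, H3L_eval]
  have key : ∀ i j : Fin 15, i ≠ j →
      H3a j ∈ (Finset.univ.erase (H3a i)).erase (H3b i) ∨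
      H3b j ∈ (Finset.univ.erase (H3a i)).erase (H3b i) := by decide
  rcases key i j hij with h | h
  · rw [Finset.prod_eq_zero h (H3L_a u hu j), mul_zero]
  · rw [Finset.prod_eq_zero h (H3L_b u hu j), mul_zero]

lemma H3f_zero (u : ℂ) (hu : u ^ 2 = u + 1) (i : Fin 6) (j : Fin 15) :
    aeval (R := ℂ) (H3pts u j) (H3f u i) = 0 := by
  simp only [H3f, map_prod, H3L_eval]
  have key : ∀ (i : Fin 6) (j : Fin 15),
      H3a j ∈ Finset.univ.erase i ∨ H3b j ∈ Finset.univ.erase i := by decide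
  rcases key i j with h | h
  · exact Finset.prod_eq_zero h (H3L_a u hu j)
  · exact Finset.prod_eq_zero h (H3L_b u hu j)

lemma H3Lf_mem (u : ℂ) (hu : u ^ 2 = u + 1) (k i : Fin 6) : H3L u k * H3f u i ∈ H3V u 6 := by
  refine Submodule.mem_inf.2 ⟨?_, ?_⟩
  · rw [mem_homogeneousSubmodule]
    have h := (H3L_hom u k).mul (H3prod_hom u (Finset.univ.erase i))
    simpa [H3f] using h
  · simp only [Submodule.mem_iInf, LinearMap.mem_ker, AlgHom.toLinearMap_apply]
    intro j
    rw [map_mul, H3f_zero u hu, mul_zero]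

lemma H3g_mem (u : ℂ) (hu : u ^ 2 = u + 1) (i : Fin 13) : H3g u i ∈ H3V u 6 := by
  fin_cases i <;> exact H3Lf_mem u hu _ _

lemma H3_sextics_finrank :
    Module.finrank ℂ (homogeneousSubmodule (Fin 3) ℂ 6) = 28 := by
  rw [homogeneousSubmodule_eq_finsupp_supported,
    (AddMonoidAlgebra.supportedEquivFinsupp (R := ℂ) (S := ℂ)
      {d : Fin 3 →₀ ℕ | d.degree = 6}).finrank_eq]
  have h : {d : Fin 3 →₀ ℕ | d.degree = 6} =
      ((Finset.univ : Finset (Fin 3)).finsuppAntidiag 6 : Set (Fin 3 →₀ ℕ)) := by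
    ext d
    simp [Finset.mem_finsuppAntidiag, Finsupp.degree_eq_sum]
  rw [h, Module.finrank_finsupp_self]
  simp [Finset.card_finsuppAntidiag_nat_eq_choose]
  decide

instance H3_sextics_finite : Module.Finite ℂ (homogeneousSubmodule (Fin 3) ℂ 6) :=
  Module.finite_of_finrank_pos (by rw [H3_sextics_finrank]; norm_num)

/-- Evaluation of sextics at the 15 points. -/
noncomputable def H3ev (u : ℂ) : homogeneousSubmodule (Fin 3) ℂ 6 →ₗ[ℂ] (Fin 15 → ℂ) :=
  LinearMap.pi fun i => (aeval (R := ℂ) (H3pts u i)).toLinearMap ∘ₗ Submodule.subtype _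

lemma H3ev_surj (u : ℂ) (hu : u ^ 2 = u + 1) : LinearMap.range (H3ev u) = ⊤ := by
  rw [LinearMap.range_eq_top]
  intro v
  refine ⟨∑ i, (v i / aeval (R := ℂ) (H3pts u i) (H3q u i)) • ⟨H3q u i, H3q_hom u i⟩, ?_⟩
  ext j
  simp only [map_sum, map_smul, Finset.sum_apply, Pi.smul_apply, smul_eq_mul]
  rw [Finset.sum_eq_single j]
  · exact div_mul_cancel₀ _ (H3q_ne u hu j)
  · intro i _ hij
    have : H3ev u ⟨H3q u i, H3q_hom u i⟩ j = 0 := H3q_zero u hu i j hij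
    rw [this, mul_zero]
  · simp

lemma H3V_eq (u : ℂ) : H3V u 6 =
    (LinearMap.ker (H3ev u)).map (homogeneousSubmodule (Fin 3) ℂ 6).subtype := by
  ext p
  simp only [H3V, Submodule.mem_inf, Submodule.mem_iInf, LinearMap.mem_ker, Submodule.mem_map]
  constructor
  · rintro ⟨h1, h2⟩
    exact ⟨⟨p, h1⟩, funext h2, rfl⟩
  · rintro ⟨q, hq, rfl⟩
    exact ⟨q.2, fun i => congrFun hq i⟩

lemma H3V_finrank (u : ℂ) (hu : u ^ 2 = u + 1) : Module.finrank ℂ (H3V u 6) = 13 := by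
  have h := LinearMap.finrank_range_add_finrank_ker (H3ev u)
  rw [H3ev_surj u hu, finrank_top, H3_sextics_finrank, Module.finrank_fin_fun] at h
  rw [H3V_eq, Submodule.finrank_map_subtype_eq]
  omega

/-- The value of a linear combination of the `gᵢ`. -/
lemma H3_rel (u : ℂ) (c : Fin 13 → ℂ) (h : ∑ i, c i • H3g u i = 0) (x y z : ℂ) :
    let l := H3Lv u ![x, y, z]
    (c 0 * l 0 + c 6 * l 1 + c 11 * l 2) * (l 1 * l 2 * l 3 * l 4 * l 5)
    + (c 1 * l 0 + c 12 * l 2) * (l 0 * l 2 * l 3 * l 4 * l 5)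
    + (c 2 * l 0 + c 7 * l 1) * (l 0 * l 1 * l 3 * l 4 * l 5)
    + (c 3 * l 0 + c 8 * l 1) * (l 0 * l 1 * l 2 * l 4 * l 5)
    + (c 4 * l 0 + c 9 * l 1) * (l 0 * l 1 * l 2 * l 3 * l 5)
    + (c 5 * l 0 + c 10 * l 1) * (l 0 * l 1 * l 2 * l 3 * l 4) = 0 := by
  intro l
  have hf : ∀ i, aeval (R := ℂ) ![x, y, z] (H3f u i) = ∏ j ∈ Finset.univ.erase i, l j := by
    intro i
    simp only [H3f, map_prod, H3L_eval, l]
  have e0 : (Finset.univ.erase 0 : Finset (Fin 6)) = {1, 2, 3, 4, 5} := by decide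
  have e1 : (Finset.univ.erase 1 : Finset (Fin 6)) = {0, 2, 3, 4, 5} := by decide
  have e2 : (Finset.univ.erase 2 : Finset (Fin 6)) = {0, 1, 3, 4, 5} := by decide
  have e3 : (Finset.univ.erase 3 : Finset (Fin 6)) = {0, 1, 2, 4, 5} := by decide
  have e4 : (Finset.univ.erase 4 : Finset (Fin 6)) = {0, 1, 2, 3, 5} := by decide
  have e5 : (Finset.univ.erase 5 : Finset (Fin 6)) = {0, 1, 2, 3, 4} := by decide
  have hval := congrArg (aeval (R := ℂ) ![x, y, z]) h
  have hl : ∀ k, aeval (R := ℂ) ![x, y, z] (H3L u k) = l k := fun k => H3L_eval u _ k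
  simp only [aeval_eq_eval] at hl hf
  rw [map_zero, map_sum] at hval
  simp only [Fin.sum_univ_succ, map_smul, H3g, smul_eq_mul] at hval
  simp [hl, hf, e0, e1, e2, e3, e4, e5, -Finset.mem_univ] at hval
  linear_combination hval


/-- On the line `L_k = 0` only the `k`-th summand survives. -/
lemma H3_line (l M : Fin 6 → ℂ)
    (h : M 0 * (l 1 * l 2 * l 3 * l 4 * l 5) + M 1 * (l 0 * l 2 * l 3 * l 4 * l 5)
      + M 2 * (l 0 * l 1 * l 3 * l 4 * l 5) + M 3 * (l 0 * l 1 * l 2 * l 4 * l 5)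
      + M 4 * (l 0 * l 1 * l 2 * l 3 * l 5) + M 5 * (l 0 * l 1 * l 2 * l 3 * l 4) = 0)
    (k : Fin 6) (hk : l k = 0) (hne : ∀ j, j ≠ k → l j ≠ 0) : M k = 0 := by
  have h0 := hne 0
  have h1 := hne 1
  have h2 := hne 2
  have h3 := hne 3
  have h4 := hne 4
  have h5 := hne 5
  clear hne
  fin_cases k <;> simp at h0 h1 h2 h3 h4 h5 hk ⊢ <;> simp [*] at h <;> exact h

lemma H3_coeff (u : ℂ) (hu : u ^ 2 = u + 1) (c : Fin 13 → ℂ) (h : ∑ i, c i • H3g u i = 0) :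
    ∀ i, c i = 0 := by
  have key : ∀ (k : Fin 6) (x y z : ℂ), H3Lv u ![x, y, z] k = 0 →
      (∀ j, j ≠ k → H3Lv u ![x, y, z] j ≠ 0) → _ :=
    fun k x y z => H3_line (H3Lv u ![x, y, z])
      ![c 0 * H3Lv u ![x, y, z] 0 + c 6 * H3Lv u ![x, y, z] 1 + c 11 * H3Lv u ![x, y, z] 2,
        c 1 * H3Lv u ![x, y, z] 0 + c 12 * H3Lv u ![x, y, z] 2,
        c 2 * H3Lv u ![x, y, z] 0 + c 7 * H3Lv u ![x, y, z] 1,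
        c 3 * H3Lv u ![x, y, z] 0 + c 8 * H3Lv u ![x, y, z] 1,
        c 4 * H3Lv u ![x, y, z] 0 + c 9 * H3Lv u ![x, y, z] 1,
        c 5 * H3Lv u ![x, y, z] 0 + c 10 * H3Lv u ![x, y, z] 1]
      (H3_rel u c h x y z) k
  have p0 := key 2 u 0 1 (by simp [H3Lv])
    (by intro j hj; fin_cases j <;> simp [H3Lv] at hj ⊢ <;> grind)
  have p1 := key 2 u 1 1 (by simp [H3Lv])
    (by intro j hj; fin_cases j <;> simp [H3Lv] at hj ⊢ <;> grind)
  have p2 := key 3 (-u) 0 1 (by simp [H3Lv])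
    (by intro j hj; fin_cases j <;> simp [H3Lv] at hj ⊢ <;> grind)
  have p3 := key 3 (-u) 1 1 (by simp [H3Lv])
    (by intro j hj; fin_cases j <;> simp [H3Lv] at hj ⊢ <;> grind)
  have p4 := key 4 (u-1) 1 0 (by simp [H3Lv])
    (by intro j hj; fin_cases j <;> simp [H3Lv] at hj ⊢ <;> grind)
  have p5 := key 4 (u-1) 1 1 (by simp [H3Lv])
    (by intro j hj; fin_cases j <;> simp [H3Lv] at hj ⊢ <;> grind)
  have p6 := key 5 (1-u) 1 0 (by simp [H3Lv])
    (by intro j hj; fin_cases j <;> simp [H3Lv] at hj ⊢ <;> grind)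
  have p7 := key 5 (1-u) 1 1 (by simp [H3Lv])
    (by intro j hj; fin_cases j <;> simp [H3Lv] at hj ⊢ <;> grind)
  have p8 := key 1 0 (1-u) 1 (by simp [H3Lv])
    (by intro j hj; fin_cases j <;> simp [H3Lv] at hj ⊢ <;> grind)
  have p9 := key 1 1 (1-u) 1 (by simp [H3Lv])
    (by intro j hj; fin_cases j <;> simp [H3Lv] at hj ⊢ <;> grind)
  have p10 := key 0 0 (u-1) 1 (by simp [H3Lv])
    (by intro j hj; fin_cases j <;> simp [H3Lv] at hj ⊢ <;> grind)
  have p11 := key 0 1 (u-1) 1 (by simp [H3Lv])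
    (by intro j hj; fin_cases j <;> simp [H3Lv] at hj ⊢ <;> grind)
  have q := H3_rel u c h 1 1 1
  simp only [H3Lv, Matrix.cons_val] at p0 p1 p2 p3 p4 p5 p6 p7 p8 p9 p10 p11 q
  clear key h
  have h2 : c 2 = 0 := by grind
  have h7 : c 7 = 0 := by grind
  have h3 : c 3 = 0 := by grind
  have h8 : c 8 = 0 := by grind
  have h4 : c 4 = 0 := by grind
  have h9 : c 9 = 0 := by grind
  have h5 : c 5 = 0 := by grind
  have h10 : c 10 = 0 := by grind
  have h12 : c 12 = 0 := by grind
  have h1 : c 1 = 0 := by grind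
  have h11 : c 11 = 0 := by grind
  have h6 : c 6 = 0 := by grind
  have h0 : c 0 = 0 := by
    clear p0 p1 p2 p3 p4 p5 p6 p7 p8 p9 p10 p11
    simp only [h1, h2, h3, h4, h5, h6, h7, h8, h9, h10, h11, h12] at q
    grind
  intro i
  fin_cases i <;> assumption

lemma H3g_indep (u : ℂ) (hu : u ^ 2 = u + 1) : LinearIndependent ℂ (H3g u) :=
  Fintype.linearIndependent_iff.2 fun c h => H3_coeff u hu c h

/-- The space of homogeneous sextics in `ℂ[x,y,z]` vanishing at all 15 points of `Z(H₃)`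
has dimension 13, and the 13 sextics `g₁, …, g₁₃` form a basis of it. -/
theorem H3g_is_basis_of_sextics (u : ℂ) (hu : u ^ 2 = u + 1) :
    Module.finrank ℂ (H3V u 6) = 13 ∧
    (∀ i, H3g u i ∈ H3V u 6) ∧ LinearIndependent ℂ (H3g u) ∧
    Submodule.span ℂ (Set.range (H3g u)) = H3V u 6 := by
  have hfin := H3V_finrank u hu
  have hind := H3g_indep u hu
  have hmem := H3g_mem u hu
  refine ⟨hfin, hmem, hind, ?_⟩
  have : Module.Finite ℂ (H3V u 6) :=
    Module.finite_of_finrank_pos (by rw [hfin]; norm_num)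
  refine Submodule.eq_of_le_of_finrank_eq ?_ ?_
  · rw [Submodule.span_le]
    rintro _ ⟨i, rfl⟩
    exact hmem i
  · rw [finrank_span_eq_card hind, hfin, Fintype.card_fin]
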